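/- Let φ : K^n → ℝ be a continuous, translation-invariant, monotone valuation that is 1-homogeneous (φ(tK) = tφ(K) for all t ≥ 0). Then for all K, L ∈ K^n and K_t := (1−t)K + tL, the join-deviation satisfies ρ_φ(K_t, K_s) = |t − s| · ρ_φ(K, L) for all t, s ∈ [0,1]. In particular, for every partition 0 = p_0 < ⋯ < p_N = 1, Σ_{i=1}^N ρ_φ(K_{p_{i−1}}, K_{p_i}) = ρ_φ(K, L), i.e. the Minkowski segment t ↦ K_t is a shortest path from K to L of length ρ_φ(K,L). -/

import Mathlib

/-!
The theorem rests on the Minkowski additivity `φ (K + L) = φ K + φ L` (`val_add`). Once it is known,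
for `t ≤ s` one writes `K_t = M + (s - t)K` and `K_s = M + (s - t)L` with `M = (1 - s)K + tL`; then
`conv (K_t ∪ K_s) = M + (s - t) conv (K ∪ L)`, and additivity and homogeneity give
`ρ_φ(K_t, K_s) = (s - t) ρ_φ(K, L)`. The sum over a partition telescopes.

For additivity, continuity allows `L` to be replaced by a polytope `P` with `m` vertices, that is,
the image `π Δ` of the standard simplex `Δ ⊆ ℝ^m` under a linear map. The function
`D ↦ φ (K + π D)` still satisfies the valuation identity when a convex body `D ⊆ ℝ^m` is cut by a
coordinate hyperplane `x i = 1` (`valuation_cut`), because a segment joining two points with the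
same sum can be followed until it crosses the hyperplane. For `t ≥ m` every point of `tΔ` has a
coordinate at least `1`, so inclusion-exclusion over the half-spaces `1 ≤ x i` (`sum_cut_congr`)
expresses the value at `tΔ` through those at `tΔ ∩ {x | ∀ i ∈ S, 1 ≤ x i}`, which is a translate of
`(t - |S|)Δ`. By translation invariance the `m`-th forward difference of `k ↦ φ (K + kP)` vanishes
(`fwdDiff_iter_polytope`), so this function of `k` is polynomial. By homogeneity and continuity
`φ (K + kP) / k = φ (k⁻¹K + P) → φ P`, so the polynomial is `φ K + k φ P`; take `k = 1`.
-/

open scoped Pointwise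
open MeasureTheory

noncomputable section

abbrev Euc (n : ℕ) := EuclideanSpace ℝ (Fin n)

def IsConvexBody {n : ℕ} (K : Set (Euc n)) : Prop :=
  K.Nonempty ∧ IsCompact K ∧ Convex ℝ K

def IsValuation {n : ℕ} (φ : Set (Euc n) → ℝ) : Prop :=
  φ ∅ = 0 ∧ ∀ K L : Set (Euc n), IsConvexBody K → IsConvexBody L →
    Convex ℝ (K ∪ L) → φ (K ∪ L) + φ (K ∩ L) = φ K + φ L

def ContinuousVal {n : ℕ} (φ : Set (Euc n) → ℝ) : Prop :=
  ∀ K : Set (Euc n), IsConvexBody K → ∀ ε : ℝ, 0 < ε → ∃ δ : ℝ, 0 < δ ∧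
    ∀ L : Set (Euc n), IsConvexBody L → Metric.hausdorffDist K L < δ → |φ L - φ K| < ε

def TransInvariant {n : ℕ} (φ : Set (Euc n) → ℝ) : Prop :=
  ∀ (K : Set (Euc n)) (x : Euc n), IsConvexBody K → φ (K + ({x} : Set (Euc n))) = φ K

def MonotoneVal {n : ℕ} (φ : Set (Euc n) → ℝ) : Prop :=
  ∀ K L : Set (Euc n), IsConvexBody K → IsConvexBody L → K ⊆ L → φ K ≤ φ L

/-- The `φ` join-deviation `ρ_φ(K,L) = 2 φ(conv(K ∪ L)) - φ K - φ L`. -/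
def JoinDev {n : ℕ} (φ : Set (Euc n) → ℝ) (K L : Set (Euc n)) : ℝ :=
  2 * φ (convexHull ℝ (K ∪ L)) - φ K - φ L

/-- The Minkowski combination `(1-t)K + tL`. -/
def minkComb {n : ℕ} (K L : Set (Euc n)) (t : ℝ) : Set (Euc n) :=
  (1 - t) • K + t • L

/-! ### Sequences with a vanishing iterated difference -/

open Filter Topology in
/-- A sequence with a vanishing iterated forward difference is polynomial; if moreover
`g k / k → b`, the polynomial has degree at most one and slope `b`. -/
lemma eq_add_of_fwdDiff_iter_eq_zero (g : ℕ → ℝ) (m : ℕ)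
    (h : ∀ k, (fwdDiff 1)^[m] g k = 0) (b : ℝ)
    (hb : Tendsto (fun k : ℕ => g k / k) atTop (𝓝 b)) : g 1 = g 0 + b := by
  set c : ℕ → ℝ := fun j => (fwdDiff 1)^[j] g 0 with hc
  have hc0 : ∀ j, m ≤ j → c j = 0 := by
    intro j hj
    obtain ⟨d, rfl⟩ := Nat.exists_eq_add_of_le' hj
    have hz : (fwdDiff 1)^[m] g = fun _ => 0 := funext h
    simp only [hc, Function.iterate_add_apply, hz]
    have : ∀ d : ℕ, (fwdDiff 1)^[d] (fun _ : ℕ => (0 : ℝ)) = fun _ => 0 := by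
      intro d
      induction d with
      | zero => rfl
      | succ d ih => rw [Function.iterate_succ_apply', ih]; simp
    rw [this]
  -- Newton's forward difference formula as a polynomial
  set p : Polynomial ℝ := ∑ j ∈ Finset.range m,
    Polynomial.C (c j / (j.factorial : ℝ)) * descPochhammer ℝ j with hp
  have hg : ∀ k : ℕ, g k = p.eval (k : ℝ) := by
    intro k
    have h1 := shift_eq_sum_fwdDiff_iter 1 g k 0
    simp only [zero_add, smul_eq_mul, mul_one, nsmul_eq_mul] at h1
    change g k = ∑ j ∈ Finset.range (k + 1), (k.choose j : ℝ) * c j at h1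
    rw [h1, hp, Polynomial.eval_finsetSum]
    have e1 : ∀ j, (Polynomial.C (c j / (j.factorial : ℝ)) * descPochhammer ℝ j).eval (k : ℝ)
        = (k.choose j : ℝ) * c j := by
      intro j
      rw [Nat.cast_choose_eq_descPochhammer_div]
      simp
      ring
    simp only [e1]
    rw [Finset.sum_subset (Finset.range_mono (show k + 1 ≤ k + 1 + m by omega)) (f :=
        fun j => (k.choose j : ℝ) * c j),
      Finset.sum_subset (Finset.range_mono (show m ≤ k + 1 + m by omega)) (f :=
        fun j => (k.choose j : ℝ) * c j)]
    · intro j _ hj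
      simp only [Finset.mem_range, not_lt] at hj
      rw [hc0 j hj, mul_zero]
    · intro j _ hj
      simp only [Finset.mem_range, not_lt] at hj
      rw [Nat.choose_eq_zero_of_lt (by omega)]; simp
  have hdeg : p.degree ≤ 1 := by
    by_contra! hlt
    have ht := (Polynomial.abs_div_tendsto_atTop_atTop_of_degree_gt p Polynomial.X
      (by rwa [Polynomial.degree_X]) Polynomial.X_ne_zero).comp
      (tendsto_natCast_atTop_atTop (R := ℝ))
    have ht' : Tendsto (fun k : ℕ => |g k / k|) atTop atTop := by
      refine ht.congr fun k => ?_
      simp [hg]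
    exact not_tendsto_nhds_of_tendsto_atTop ht' _ hb.abs
  have hlin := Polynomial.eq_X_add_C_of_degree_le_one hdeg
  set a := p.coeff 1
  set e := p.coeff 0
  have hge : ∀ k : ℕ, g k = a * k + e := by intro k; rw [hg, hlin]; simp
  have hlim : Tendsto (fun k : ℕ => g k / k) atTop (𝓝 a) := by
    have h2 : Tendsto (fun k : ℕ => a + e / k) atTop (𝓝 (a + 0)) :=
      tendsto_const_nhds.add (tendsto_const_div_atTop_nhds_zero_nat e)
    rw [add_zero] at h2
    refine h2.congr' ?_
    filter_upwards [eventually_gt_atTop 0] with k hk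
    have : (k : ℝ) ≠ 0 := by positivity
    rw [hge]; field_simp
  rw [tendsto_nhds_unique hb hlim, hge, hge]
  simp; ring

/-! ### Cutting a convex body by the hyperplanes `x i = 1` -/

/-- Inclusion-exclusion over the half-spaces `1 ≤ x i`, `i ∈ T`: the alternating sum of the values
of `ψ` on `M ∩ {x | ∀ i ∈ S, 1 ≤ x i}`, `S ⊆ T`, depends only on the part of `M` in which
`x i ≤ 1` for all `i ∈ T`. -/
lemma sum_cut_congr {ι : Type*} [DecidableEq ι] (ψ : Set (ι → ℝ) → ℝ)
    (hψ : ∀ M : Set (ι → ℝ), IsCompact M → Convex ℝ M → ∀ i,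
      ψ M + ψ (M ∩ {x | x i = 1}) = ψ (M ∩ {x | x i ≤ 1}) + ψ (M ∩ {x | 1 ≤ x i}))
    (T : Finset ι) : ∀ M M' : Set (ι → ℝ), IsCompact M → Convex ℝ M → IsCompact M' →
      Convex ℝ M' → M ∩ {x | ∀ i ∈ T, x i ≤ 1} = M' ∩ {x | ∀ i ∈ T, x i ≤ 1} →
      ∑ S ∈ T.powerset, (-1 : ℝ) ^ S.card * ψ (M ∩ {x | ∀ i ∈ S, 1 ≤ x i}) =
      ∑ S ∈ T.powerset, (-1 : ℝ) ^ S.card * ψ (M' ∩ {x | ∀ i ∈ S, 1 ≤ x i}) := by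
  have hle_cl : ∀ i, IsClosed {x : ι → ℝ | x i ≤ 1} := fun i =>
    isClosed_le (continuous_apply i) continuous_const
  have hge_cl : ∀ i, IsClosed {x : ι → ℝ | 1 ≤ x i} := fun i =>
    isClosed_le continuous_const (continuous_apply i)
  have heq_cl : ∀ i, IsClosed {x : ι → ℝ | x i = 1} := fun i =>
    isClosed_eq (continuous_apply i) continuous_const
  have hle_cv : ∀ i, Convex ℝ {x : ι → ℝ | x i ≤ 1} := fun i =>
    convex_halfSpace_le (LinearMap.proj (R := ℝ) (φ := fun _ : ι => ℝ) i).isLinear 1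
  have hge_cv : ∀ i, Convex ℝ {x : ι → ℝ | 1 ≤ x i} := fun i =>
    convex_halfSpace_ge (LinearMap.proj (R := ℝ) (φ := fun _ : ι => ℝ) i).isLinear 1
  have heq_cv : ∀ i, Convex ℝ {x : ι → ℝ | x i = 1} := fun i =>
    convex_hyperplane (LinearMap.proj (R := ℝ) (φ := fun _ : ι => ℝ) i).isLinear 1
  have hH_cl : ∀ S : Finset ι, IsClosed {x : ι → ℝ | ∀ i ∈ S, 1 ≤ x i} := by
    intro S
    simp only [Set.ofPred_forall]
    exact isClosed_iInter fun i => isClosed_iInter fun _ => hge_cl i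
  have hH_cv : ∀ S : Finset ι, Convex ℝ {x : ι → ℝ | ∀ i ∈ S, 1 ≤ x i} := by
    intro S
    simp only [Set.ofPred_forall]
    exact convex_iInter fun i => convex_iInter fun _ => hge_cv i
  induction T using Finset.induction_on with
  | empty =>
    intro M M' _ _ _ _ h
    simp only [Finset.notMem_empty, false_imp_iff, implies_true, Set.ofPred_true,
      Set.inter_univ] at h
    rw [h]
  | insert a T ha ih =>
    have key : ∀ M : Set (ι → ℝ), IsCompact M → Convex ℝ M →
        ∑ S ∈ (insert a T).powerset, (-1 : ℝ) ^ S.card * ψ (M ∩ {x | ∀ i ∈ S, 1 ≤ x i}) =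
        ∑ S ∈ T.powerset,
          (-1 : ℝ) ^ S.card * ψ ((M ∩ {x | x a ≤ 1}) ∩ {x | ∀ i ∈ S, 1 ≤ x i}) -
        ∑ S ∈ T.powerset,
          (-1 : ℝ) ^ S.card * ψ ((M ∩ {x | x a = 1}) ∩ {x | ∀ i ∈ S, 1 ≤ x i}) := by
      intro M hM hMc
      rw [Finset.sum_powerset_insert ha, ← Finset.sum_add_distrib, ← Finset.sum_sub_distrib]
      refine Finset.sum_congr rfl fun S hS => ?_
      have haS : a ∉ S := fun h => ha (Finset.mem_powerset.1 hS h)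
      have h1 := hψ (M ∩ {x | ∀ i ∈ S, 1 ≤ x i}) (hM.inter_right (hH_cl S))
        (hMc.inter (hH_cv S)) a
      have e1 : M ∩ {x : ι → ℝ | ∀ i ∈ insert a S, 1 ≤ x i} =
          M ∩ {x | ∀ i ∈ S, 1 ≤ x i} ∩ {x | 1 ≤ x a} := by
        ext x
        simp only [Set.mem_inter_iff, Set.mem_ofPred_eq, Finset.forall_mem_insert]
        tauto
      rw [Finset.card_insert_of_notMem haS, e1, Set.inter_right_comm M {x | x a ≤ 1},
        Set.inter_right_comm M {x | x a = 1}, pow_succ]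
      linear_combination (-1 : ℝ) ^ S.card * h1
    intro M M' hM hMc hM' hMc' h
    rw [key M hM hMc, key M' hM' hMc']
    congr 1
    · refine ih _ _ (hM.inter_right (hle_cl a)) (hMc.inter (hle_cv a))
        (hM'.inter_right (hle_cl a)) (hMc'.inter (hle_cv a)) ?_
      ext x
      have hx := Set.ext_iff.1 h x
      simp only [Set.mem_inter_iff, Set.mem_ofPred_eq, Finset.forall_mem_insert] at hx ⊢
      tauto
    · refine ih _ _ (hM.inter_right (heq_cl a)) (hMc.inter (heq_cv a))
        (hM'.inter_right (heq_cl a)) (hMc'.inter (heq_cv a)) ?_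
      ext x
      have hx := Set.ext_iff.1 h x
      simp only [Set.mem_inter_iff, Set.mem_ofPred_eq, Finset.forall_mem_insert] at hx ⊢
      have : x a = 1 → x a ≤ 1 := fun h => h.le
      tauto

/-- The dilated standard simplex `{x | 0 ≤ x i, ∑ i, x i = t}`, i.e. `t • stdSimplex` for
`0 ≤ t`. -/
def dilSimplex (ι : Type*) [Fintype ι] (t : ℝ) : Set (ι → ℝ) :=
  {x | (∀ i, 0 ≤ x i) ∧ ∑ i, x i = t}

lemma isCompact_dilSimplex (ι : Type*) [Fintype ι] (t : ℝ) : IsCompact (dilSimplex ι t) := by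
  refine (isCompact_Icc (a := (0 : ι → ℝ)) (b := fun _ => t)).of_isClosed_subset ?_ ?_
  · simp only [dilSimplex, Set.ofPred_and, Set.ofPred_forall]
    exact (isClosed_iInter fun i => isClosed_le continuous_const (continuous_apply i)).inter
      (isClosed_eq (by fun_prop) continuous_const)
  · rintro x ⟨h0, h1⟩
    refine ⟨fun i => h0 i, fun i => ?_⟩
    rw [← h1]
    exact Finset.single_le_sum (fun j _ => h0 j) (Finset.mem_univ i)

lemma convex_dilSimplex (ι : Type*) [Fintype ι] (t : ℝ) : Convex ℝ (dilSimplex ι t) := by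
  rintro x ⟨hx, hx'⟩ y ⟨hy, hy'⟩ a b ha hb hab
  refine ⟨fun i => ?_, ?_⟩
  · have := hx i
    have := hy i
    simp only [Pi.add_apply, Pi.smul_apply, smul_eq_mul]
    positivity
  · simp only [Pi.add_apply, Pi.smul_apply, smul_eq_mul, Finset.sum_add_distrib,
      ← Finset.mul_sum, hx', hy']
    rw [← add_mul, hab, one_mul]

lemma dilSimplex_eq_smul (ι : Type*) [Fintype ι] [Nonempty ι] {t : ℝ} (ht : 0 ≤ t) :
    dilSimplex ι t = t • stdSimplex ℝ ι := by
  classical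
  ext x
  rw [Set.mem_smul_set]
  constructor
  · rintro ⟨h0, h1⟩
    rcases ht.eq_or_lt with rfl | ht
    · obtain ⟨i⟩ := ‹Nonempty ι›
      refine ⟨Pi.single i 1, single_mem_stdSimplex ℝ i, ?_⟩
      have := (Finset.sum_eq_zero_iff_of_nonneg fun j _ => h0 j).1 h1
      ext j
      simp [this j (Finset.mem_univ j)]
    · refine ⟨t⁻¹ • x, ⟨fun i => ?_, ?_⟩, ?_⟩
      · have := h0 i
        simp only [Pi.smul_apply, smul_eq_mul]
        positivity
      · simp only [Pi.smul_apply, smul_eq_mul, ← Finset.mul_sum, h1]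
        exact inv_mul_cancel₀ ht.ne'
      · rw [smul_smul, mul_inv_cancel₀ ht.ne', one_smul]
  · rintro ⟨y, ⟨h0, h1⟩, rfl⟩
    refine ⟨fun i => ?_, ?_⟩
    · have := h0 i
      simp only [Pi.smul_apply, smul_eq_mul]
      positivity
    · simp only [Pi.smul_apply, smul_eq_mul, ← Finset.mul_sum, h1, mul_one]

/-- Cutting off the part where `1 ≤ x i` for `i ∈ S` leaves a translate of a smaller simplex. -/
lemma dilSimplex_inter {ι : Type*} [Fintype ι] [DecidableEq ι] (t : ℝ) (S : Finset ι) :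
    dilSimplex ι t ∩ {x | ∀ i ∈ S, 1 ≤ x i} =
      dilSimplex ι (t - S.card) + {fun i => if i ∈ S then 1 else 0} := by
  have hs : ∑ i, (if i ∈ S then (1 : ℝ) else 0) = S.card := by simp
  ext x
  rw [Set.add_singleton, Set.mem_image]
  constructor
  · rintro ⟨⟨h0, h1⟩, h2⟩
    refine ⟨x - fun i => if i ∈ S then 1 else 0, ⟨fun i => ?_, ?_⟩, by simp⟩
    · simp only [Pi.sub_apply]
      split_ifs with h
      · linarith [h2 i h]
      · linarith [h0 i]
    · simp only [Pi.sub_apply, Finset.sum_sub_distrib, h1, hs]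
  · rintro ⟨y, ⟨h0, h1⟩, rfl⟩
    refine ⟨⟨fun i => ?_, ?_⟩, fun i hi => ?_⟩
    · have := h0 i
      simp only [Pi.add_apply]
      split_ifs <;> linarith
    · simp only [Pi.add_apply, Finset.sum_add_distrib, h1, hs]
      ring
    · have := h0 i
      simp only [Pi.add_apply, if_pos hi]
      linarith

/-! ### Valuations on Minkowski sums with linear images -/

/-- `D ↦ φ (K + π D)` satisfies the valuation identity for the cut of a convex body by the
hyperplane `x i = 1`. -/
lemma valuation_cut {n : ℕ} {φ : Set (Euc n) → ℝ} (hval : IsValuation φ) {K : Set (Euc n)}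
    (hK : IsConvexBody K) {ι : Type*} [Fintype ι] (π : (ι → ℝ) →ₗ[ℝ] Euc n)
    (M : Set (ι → ℝ)) (hM : IsCompact M) (hMc : Convex ℝ M) (i : ι) :
    φ (K + π '' M) + φ (K + π '' (M ∩ {x | x i = 1})) =
      φ (K + π '' (M ∩ {x | x i ≤ 1})) + φ (K + π '' (M ∩ {x | 1 ≤ x i})) := by
  have hπ : Continuous π := π.continuous_of_finiteDimensional
  have hbody : ∀ D : Set (ι → ℝ), D.Nonempty → IsCompact D → Convex ℝ D →
      IsConvexBody (K + π '' D) := fun D h1 h2 h3 =>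
    ⟨hK.1.add (h1.image _), hK.2.1.add (h2.image hπ), hK.2.2.add (h3.linear_image π)⟩
  set A := M ∩ {x | x i ≤ 1} with hA
  set B := M ∩ {x | 1 ≤ x i} with hB
  have hU : A ∪ B = M := by
    rw [hA, hB, ← Set.inter_union_distrib_left]
    refine Set.inter_eq_left.2 fun x _ => ?_
    exact le_total (x i) 1
  have hI : A ∩ B = M ∩ {x | x i = 1} := by
    ext x
    simp only [hA, hB, Set.mem_inter_iff, Set.mem_ofPred_eq]
    constructor
    · rintro ⟨⟨h, h1⟩, -, h2⟩
      exact ⟨h, le_antisymm h1 h2⟩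
    · rintro ⟨h, h1⟩
      exact ⟨⟨h, h1.le⟩, h, h1.ge⟩
  rw [← hI]
  rcases A.eq_empty_or_nonempty with hAe | hAn
  · have : B = M := by rw [← hU, hAe, Set.empty_union]
    rw [hAe, this]
    simp [add_comm]
  rcases B.eq_empty_or_nonempty with hBe | hBn
  · have : A = M := by rw [← hU, hBe, Set.union_empty]
    rw [hBe, this]
    simp
  have hAb : IsConvexBody (K + π '' A) := hbody A hAn
    (hM.inter_right (isClosed_le (continuous_apply i) continuous_const))
    (hMc.inter (convex_halfSpace_le
      (LinearMap.proj (R := ℝ) (φ := fun _ : ι => ℝ) i).isLinear 1))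
  have hBb : IsConvexBody (K + π '' B) := hbody B hBn
    (hM.inter_right (isClosed_le continuous_const (continuous_apply i)))
    (hMc.inter (convex_halfSpace_ge
      (LinearMap.proj (R := ℝ) (φ := fun _ : ι => ℝ) i).isLinear 1))
  have hUn : (K + π '' A) ∪ (K + π '' B) = K + π '' M := by
    rw [← Set.add_union, ← Set.image_union, hU]
  have hIn : (K + π '' A) ∩ (K + π '' B) = K + π '' (A ∩ B) := by
    apply Set.Subset.antisymm
    · rintro x ⟨⟨k, hk, _, ⟨a, ha, rfl⟩, rfl⟩, ⟨k', hk', _, ⟨b, hb, rfl⟩, hx⟩⟩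
      simp only at hx
      -- the segment from `a` to `b` meets the hyperplane, and it lies over the single point `x`
      obtain ⟨p, q, hp, hq, hpq, h1⟩ : ∃ p q : ℝ, 0 ≤ p ∧ 0 ≤ q ∧ p + q = 1 ∧
          p * a i + q * b i = 1 := by
        have ha1 : a i ≤ 1 := ha.2
        have hb1 : 1 ≤ b i := hb.2
        have hmem : (1 : ℝ) ∈ segment ℝ (a i) (b i) := by
          rw [segment_eq_Icc (ha1.trans hb1)]
          exact ⟨ha1, hb1⟩
        obtain ⟨p, q, hp, hq, hpq, h⟩ := hmem
        exact ⟨p, q, hp, hq, hpq, by simpa using h⟩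
      have hc : p • a + q • b ∈ M := hMc ha.1 hb.1 hp hq hpq
      have hci : (p • a + q • b) i = 1 := by simpa using h1
      refine ⟨p • k + q • k', hK.2.2 hk hk' hp hq hpq, π (p • a + q • b),
        ⟨_, ⟨⟨hc, hci.le⟩, ⟨hc, hci.ge⟩⟩, rfl⟩, ?_⟩
      simp only [map_add, map_smul]
      calc p • k + q • k' + (p • π a + q • π b)
          = p • (k + π a) + q • (k' + π b) := by module
        _ = (p + q) • (k + π a) := by rw [hx]; module
        _ = k + π a := by rw [hpq, one_smul]
    · exact Set.subset_inter
        (Set.add_subset_add_left (Set.image_mono Set.inter_subset_left))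
        (Set.add_subset_add_left (Set.image_mono Set.inter_subset_right))
  have hcv : Convex ℝ ((K + π '' A) ∪ (K + π '' B)) := by
    rw [hUn]; exact hK.2.2.add (hMc.linear_image π)
  have := hval.2 _ _ hAb hBb hcv
  rwa [hUn, hIn] at this

/-- For the polytope `P = π (stdSimplex)` the function `k ↦ φ (K + kP)` on `ℕ` has vanishing
iterated forward difference of order the number of vertices. -/
lemma fwdDiff_iter_polytope {n : ℕ} {φ : Set (Euc n) → ℝ} (hval : IsValuation φ)
    (htrans : TransInvariant φ) {K : Set (Euc n)} (hK : IsConvexBody K) {ι : Type*} [Fintype ι]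
    [Nonempty ι] (π : (ι → ℝ) →ₗ[ℝ] Euc n) (k : ℕ) :
    (fwdDiff 1)^[Fintype.card ι] (fun k : ℕ => φ (K + (k : ℝ) • (π '' stdSimplex ℝ ι))) k = 0 := by
  classical
  set m := Fintype.card ι with hm
  set g : ℕ → ℝ := fun k => φ (K + (k : ℝ) • (π '' stdSimplex ℝ ι)) with hg
  have hπ : Continuous π := π.continuous_of_finiteDimensional
  set ψ : Set (ι → ℝ) → ℝ := fun D => φ (K + π '' D) with hψ
  have hcut := fun M hM hMc i => valuation_cut hval hK π M hM hMc i
  set t : ℝ := ((k + m : ℕ) : ℝ) with ht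
  have hterm : ∀ S : Finset ι, ψ (dilSimplex ι t ∩ {x | ∀ i ∈ S, 1 ≤ x i}) =
      g (k + (m - S.card)) := by
    intro S
    have hS : S.card ≤ m := Finset.card_le_univ S
    have e : t - S.card = ((k + (m - S.card) : ℕ) : ℝ) := by
      rw [ht]; push_cast [Nat.cast_sub hS]; ring
    have hnn : (0 : ℝ) ≤ ((k + (m - S.card) : ℕ) : ℝ) := Nat.cast_nonneg _
    simp only [hψ, hg]
    rw [dilSimplex_inter, e, Set.image_add, Set.image_singleton, ← add_assoc,
      dilSimplex_eq_smul ι hnn, Set.image_smul_comm _ _ _ (fun x => map_smul π _ x)]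
    refine htrans _ _ ⟨?_, ?_, ?_⟩
    · exact hK.1.add (Set.Nonempty.smul_set (Set.Nonempty.image _ ⟨_, single_mem_stdSimplex ℝ (Classical.arbitrary ι)⟩))
    · exact hK.2.1.add (((isCompact_stdSimplex ℝ ι).image hπ).smul _)
    · exact hK.2.2.add (((convex_stdSimplex ℝ ι).linear_image π).smul _)
  -- the alternating sum over all subsets vanishes: split off one coordinate `a` and use that
  -- `x i ≤ 1` for `i ≠ a` and `∑ x i ≥ m` force `1 ≤ x a`
  have hsum : ∑ S ∈ (Finset.univ : Finset ι).powerset,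
      (-1 : ℝ) ^ S.card * ψ (dilSimplex ι t ∩ {x | ∀ i ∈ S, 1 ≤ x i}) = 0 := by
    obtain ⟨a⟩ := ‹Nonempty ι›
    have hage_cl : IsClosed {x : ι → ℝ | 1 ≤ x a} :=
      isClosed_le continuous_const (continuous_apply a)
    have hage_cv : Convex ℝ {x : ι → ℝ | 1 ≤ x a} :=
      convex_halfSpace_ge (LinearMap.proj (R := ℝ) (φ := fun _ : ι => ℝ) a).isLinear 1
    rw [← Finset.insert_erase (Finset.mem_univ a),
      Finset.sum_powerset_insert (Finset.notMem_erase a _),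
      sum_cut_congr ψ hcut (Finset.univ.erase a) (dilSimplex ι t)
        (dilSimplex ι t ∩ {x | 1 ≤ x a}) (isCompact_dilSimplex ι t) (convex_dilSimplex ι t)
        ((isCompact_dilSimplex ι t).inter_right hage_cl)
        ((convex_dilSimplex ι t).inter hage_cv), ← Finset.sum_add_distrib]
    · refine Finset.sum_eq_zero fun S hS => ?_
      have haS : a ∉ S := fun h => Finset.notMem_erase a _ (Finset.mem_powerset.1 hS h)
      have e1 : dilSimplex ι t ∩ {x : ι → ℝ | ∀ i ∈ insert a S, 1 ≤ x i} =
          dilSimplex ι t ∩ {x | 1 ≤ x a} ∩ {x | ∀ i ∈ S, 1 ≤ x i} := by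
        ext x
        simp only [Set.mem_inter_iff, Set.mem_ofPred_eq, Finset.forall_mem_insert]
        tauto
      rw [Finset.card_insert_of_notMem haS, e1]
      ring
    · ext x
      simp only [Set.mem_inter_iff, Set.mem_ofPred_eq]
      refine ⟨fun ⟨h1, h2⟩ => ⟨⟨h1, ?_⟩, h2⟩, fun ⟨⟨h1, _⟩, h2⟩ => ⟨h1, h2⟩⟩
      have h3 := h1.2
      rw [← Finset.add_sum_erase _ _ (Finset.mem_univ a)] at h3
      have h4 : ∑ i ∈ Finset.univ.erase a, x i ≤ ∑ i ∈ Finset.univ.erase a, (1 : ℝ) :=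
        Finset.sum_le_sum h2
      have h5 : (1 : ℝ) + ∑ i ∈ Finset.univ.erase a, (1 : ℝ) = m := by
        rw [Finset.add_sum_erase _ (fun _ => (1 : ℝ)) (Finset.mem_univ a)]
        simp [hm]
      have h6 : (m : ℝ) ≤ t := by rw [ht]; push_cast; linarith [Nat.cast_nonneg (α := ℝ) k]
      linarith
  simp only [hterm] at hsum
  rw [Finset.sum_powerset_apply_card (fun c => (-1 : ℝ) ^ c * g (k + (m - c)))] at hsum
  rw [fwdDiff_iter_eq_sum_shift, ← hsum, Finset.card_univ, ← hm,
    ← Finset.sum_flip]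
  refine Finset.sum_congr rfl fun j hj => ?_
  have hj' : j ≤ m := by simpa [Nat.lt_succ_iff] using hj
  simp only [Nat.sub_sub_self hj', Nat.choose_symm hj', zsmul_eq_mul, nsmul_eq_mul]
  push_cast
  simp
  ring

/-! ### Minkowski additivity -/

lemma IsConvexBody.add {n : ℕ} {K L : Set (Euc n)} (hK : IsConvexBody K) (hL : IsConvexBody L) :
    IsConvexBody (K + L) :=
  ⟨hK.1.add hL.1, hK.2.1.add hL.2.1, hK.2.2.add hL.2.2⟩

lemma IsConvexBody.smul {n : ℕ} {K : Set (Euc n)} (hK : IsConvexBody K) (t : ℝ) :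
    IsConvexBody (t • K) :=
  ⟨hK.1.smul_set, hK.2.1.smul t, hK.2.2.smul t⟩

open Filter Topology in
/-- As `k → ∞`, `φ (K + kP) / k = φ (k⁻¹ K + P) → φ P`. -/
lemma tendsto_val_add_smul_div {n : ℕ} {φ : Set (Euc n) → ℝ} (hcont : ContinuousVal φ)
    (hhomog : ∀ K : Set (Euc n), IsConvexBody K → ∀ t : ℝ, 0 ≤ t → φ (t • K) = t * φ K)
    {K P : Set (Euc n)} (hK : IsConvexBody K) (hP : IsConvexBody P) :
    Tendsto (fun k : ℕ => φ (K + (k : ℝ) • P) / k) atTop (𝓝 (φ P)) := by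
  rw [Metric.tendsto_atTop]
  intro ε hε
  obtain ⟨δ, hδ, H⟩ := hcont P hP ε hε
  obtain ⟨R, hR⟩ := hK.2.1.isBounded.exists_norm_le
  obtain ⟨x₀, hx₀⟩ := hK.1
  have hR0 : 0 ≤ R := (norm_nonneg _).trans (hR x₀ hx₀)
  obtain ⟨N, hN⟩ := exists_nat_gt (R / δ)
  refine ⟨N + 1, fun k hk => ?_⟩
  have hk0 : (0 : ℝ) < k := by exact_mod_cast (show 0 < k by omega)
  have hkN : (N : ℝ) ≤ k := by exact_mod_cast (show N ≤ k by omega)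
  have e : φ (K + (k : ℝ) • P) / k = φ ((k : ℝ)⁻¹ • K + P) := by
    have e1 : K + (k : ℝ) • P = (k : ℝ) • ((k : ℝ)⁻¹ • K + P) := by
      rw [smul_add, smul_smul, mul_inv_cancel₀ hk0.ne', one_smul]
    rw [e1, hhomog _ ((hK.smul _).add hP) _ hk0.le]
    field_simp
  rw [e, Real.dist_eq]
  refine H _ ((hK.smul _).add hP) (lt_of_le_of_lt (b := R / k) ?_ ?_)
  · have hb : ∀ x ∈ K, ‖(k : ℝ)⁻¹ • x‖ ≤ R / k := by
      intro x hx
      rw [norm_smul, norm_inv, Real.norm_natCast, div_eq_inv_mul]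
      exact mul_le_mul_of_nonneg_left (hR x hx) (by positivity)
    refine Metric.hausdorffDist_le_of_mem_dist (by positivity) (fun y hy => ?_) ?_
    · refine ⟨(k : ℝ)⁻¹ • x₀ + y, Set.add_mem_add (Set.smul_mem_smul_set hx₀) hy, ?_⟩
      rw [dist_eq_norm, sub_add_cancel_right, norm_neg]
      exact hb x₀ hx₀
    · rintro _ ⟨_, ⟨x, hx, rfl⟩, y, hy, rfl⟩
      refine ⟨y, hy, ?_⟩
      simp only [dist_eq_norm, add_sub_cancel_right]
      exact hb x hx
  · rw [div_lt_iff₀ hδ] at hN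
    rw [div_lt_iff₀ hk0]
    nlinarith

/-- Minkowski additivity when one summand is a polytope. -/
lemma val_add_polytope {n : ℕ} {φ : Set (Euc n) → ℝ}
    (hval : IsValuation φ) (hcont : ContinuousVal φ) (htrans : TransInvariant φ)
    (hhomog : ∀ K : Set (Euc n), IsConvexBody K → ∀ t : ℝ, 0 ≤ t → φ (t • K) = t * φ K)
    {K : Set (Euc n)} (hK : IsConvexBody K) {F : Set (Euc n)} (hF : F.Finite)
    (hFn : F.Nonempty) :
    φ (K + convexHull ℝ F) = φ K + φ (convexHull ℝ F) := by
  have hP : IsConvexBody (convexHull ℝ F) :=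
    ⟨hFn.convexHull, hF.isCompact_convexHull ℝ, convex_convexHull ℝ F⟩
  have hlim := tendsto_val_add_smul_div hcont hhomog hK hP
  let := hF.fintype
  have : Nonempty F := hFn.to_subtype
  have hdiff := fun k => fwdDiff_iter_polytope hval htrans hK
    (∑ x : F, (LinearMap.proj (R := ℝ) x).smulRight x.1) k
  have hPeq := hF.convexHull_eq_image (R := ℝ)
  have hdiff' : ∀ k, (fwdDiff 1)^[Fintype.card F]
      (fun k : ℕ => φ (K + (k : ℝ) • convexHull ℝ F)) k = 0 := by
    intro k
    rw [hPeq]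
    exact hdiff k
  have := eq_add_of_fwdDiff_iter_eq_zero _ _ hdiff' _ hlim
  simpa [Set.zero_smul_set hP.1] using this

/-- A continuous translation-invariant valuation that is homogeneous of degree one is Minkowski
additive. -/
lemma val_add {n : ℕ} {φ : Set (Euc n) → ℝ}
    (hval : IsValuation φ) (hcont : ContinuousVal φ) (htrans : TransInvariant φ)
    (hhomog : ∀ K : Set (Euc n), IsConvexBody K → ∀ t : ℝ, 0 ≤ t → φ (t • K) = t * φ K)
    {K L : Set (Euc n)} (hK : IsConvexBody K) (hL : IsConvexBody L) :
    φ (K + L) = φ K + φ L := by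
  refine eq_of_forall_dist_le fun ε hε => ?_
  obtain ⟨δ₁, hδ₁, H₁⟩ := hcont _ (hK.add hL) (ε / 2) (by positivity)
  obtain ⟨δ₂, hδ₂, H₂⟩ := hcont _ hL (ε / 2) (by positivity)
  set δ := min δ₁ δ₂ / 2 with hδ
  have hδ0 : 0 < δ := by positivity
  have hd1 : δ < δ₁ := by have := min_le_left δ₁ δ₂; have := lt_min hδ₁ hδ₂; rw [hδ]; linarith
  have hd2 : δ < δ₂ := by have := min_le_right δ₁ δ₂; have := lt_min hδ₁ hδ₂; rw [hδ]; linarith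
  obtain ⟨F, hFL, hF, hcov⟩ := hL.2.1.finite_cover_balls hδ0
  have hnear : ∀ x ∈ L, ∃ y ∈ F, dist x y ≤ δ := by
    intro x hx
    obtain ⟨y, hy, hxy⟩ := Set.mem_iUnion₂.1 (hcov hx)
    exact ⟨y, hy, (Metric.mem_ball.1 hxy).le⟩
  have hFn : F.Nonempty := by
    obtain ⟨x, hx⟩ := hL.1
    obtain ⟨y, hy, -⟩ := hnear x hx
    exact ⟨y, hy⟩
  have hP : IsConvexBody (convexHull ℝ F) :=
    ⟨hFn.convexHull, hF.isCompact_convexHull ℝ, convex_convexHull ℝ F⟩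
  have hPL : convexHull ℝ F ⊆ L := convexHull_min hFL hL.2.2
  have a2 := H₂ _ hP (lt_of_le_of_lt (Metric.hausdorffDist_le_of_mem_dist hδ0.le
    (fun x hx => by
      obtain ⟨y, hy, h⟩ := hnear x hx
      exact ⟨y, subset_convexHull ℝ F hy, h⟩)
    (fun x hx => ⟨x, hPL hx, by simpa using hδ0.le⟩)) hd2)
  have a1 := H₁ _ (hK.add hP) (lt_of_le_of_lt (Metric.hausdorffDist_le_of_mem_dist hδ0.le
    (by
      rintro _ ⟨k, hk, x, hx, rfl⟩
      obtain ⟨y, hy, h⟩ := hnear x hx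
      exact ⟨k + y, Set.add_mem_add hk (subset_convexHull ℝ F hy), by simpa using h⟩)
    (fun x hx => ⟨x, Set.add_subset_add_left hPL hx, by simpa using hδ0.le⟩)) hd1)
  rw [val_add_polytope hval hcont htrans hhomog hK hF hFn] at a1
  rw [abs_lt] at a1 a2
  rw [Real.dist_eq, abs_le]
  constructor <;> linarith

/-! ### The join-deviation along a Minkowski segment -/

lemma IsConvexBody.convexHull_union {n : ℕ} {K L : Set (Euc n)} (hK : IsConvexBody K)
    (hL : IsConvexBody L) : IsConvexBody (convexHull ℝ (K ∪ L)) := by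
  refine ⟨(hK.1.mono Set.subset_union_left).convexHull, ?_, convex_convexHull ℝ _⟩
  have h := (((isCompact_Icc (a := (0 : ℝ)) (b := 1)).prod (hK.2.1.prod hL.2.1)).image
    (f := fun p : ℝ × Euc n × Euc n => (1 - p.1) • p.2.1 + p.1 • p.2.2) (by fun_prop))
  convert h using 1
  rw [hK.2.2.convexHull_union hL.2.2 hK.1 hL.1]
  ext x
  rw [mem_convexJoin]
  constructor
  · rintro ⟨a, ha, b, hb, hx⟩
    rw [segment_eq_image] at hx
    obtain ⟨θ, hθ, rfl⟩ := hx
    exact ⟨(θ, a, b), ⟨hθ, ha, hb⟩, rfl⟩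
  · rintro ⟨⟨θ, a, b⟩, ⟨hθ, ha, hb⟩, rfl⟩
    refine ⟨a, ha, b, hb, ?_⟩
    rw [segment_eq_image]
    exact ⟨θ, hθ, rfl⟩

lemma JoinDev_comm {n : ℕ} (φ : Set (Euc n) → ℝ) (K L : Set (Euc n)) :
    JoinDev φ K L = JoinDev φ L K := by
  unfold JoinDev
  rw [Set.union_comm]
  ring

/-- For `t ≤ s`, `K_t = M + (s - t)K` and `K_s = M + (s - t)L` share the summand
`M = (1 - s)K + tL`, which additivity cancels from the join-deviation. -/
lemma joinDev_minkComb_of_le {n : ℕ} {φ : Set (Euc n) → ℝ}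
    (hadd : ∀ K L : Set (Euc n), IsConvexBody K → IsConvexBody L → φ (K + L) = φ K + φ L)
    (hhomog : ∀ K : Set (Euc n), IsConvexBody K → ∀ t : ℝ, 0 ≤ t → φ (t • K) = t * φ K)
    {K L : Set (Euc n)} (hK : IsConvexBody K) (hL : IsConvexBody L) {t s : ℝ} (ht : 0 ≤ t)
    (hts : t ≤ s) (hs : s ≤ 1) :
    JoinDev φ (minkComb K L t) (minkComb K L s) = (s - t) * JoinDev φ K L := by
  have hst : 0 ≤ s - t := sub_nonneg.2 hts
  set M := (1 - s) • K + t • L with hM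
  have hMb : IsConvexBody M := (hK.smul _).add (hL.smul _)
  have e1 : minkComb K L t = M + (s - t) • K := by
    have : (1 - t) • K = (1 - s) • K + (s - t) • K := by
      rw [← hK.2.2.add_smul (sub_nonneg.2 hs) hst]; congr 1; ring
    rw [minkComb, this, hM, add_right_comm]
  have e2 : minkComb K L s = M + (s - t) • L := by
    have : s • L = t • L + (s - t) • L := by
      rw [← hL.2.2.add_smul ht hst]; congr 1; ring
    rw [minkComb, this, hM, add_assoc]
  have e3 : convexHull ℝ (minkComb K L t ∪ minkComb K L s) =
      M + (s - t) • convexHull ℝ (K ∪ L) := by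
    rw [e1, e2, ← Set.add_union, ← Set.smul_set_union, convexHull_add, convexHull_smul,
      hMb.2.2.convexHull_eq]
  have hC := hK.convexHull_union hL
  unfold JoinDev
  rw [e3, e1, e2, hadd _ _ hMb (hC.smul _), hadd _ _ hMb (hK.smul _), hadd _ _ hMb (hL.smul _),
    hhomog _ hC _ hst, hhomog _ hK _ hst, hhomog _ hL _ hst]
  ring

/-- For a continuous, translation-invariant, monotone, `1`-homogeneous
valuation, the join-deviation along the Minkowski segment satisfies
`ρ_φ(K_t, K_s) = |t - s| ρ_φ(K, L)`, so the Minkowski segment is a shortest path of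
length `ρ_φ(K, L)`. -/
theorem joinDev_minkowski_segment (n : ℕ) (φ : Set (Euc n) → ℝ)
    (hval : IsValuation φ) (hcont : ContinuousVal φ) (htrans : TransInvariant φ)
    (hmono : MonotoneVal φ)
    (hhomog : ∀ K : Set (Euc n), IsConvexBody K → ∀ t : ℝ, 0 ≤ t → φ (t • K) = t * φ K) :
    ∀ K L : Set (Euc n), IsConvexBody K → IsConvexBody L →
      (∀ t s : ℝ, t ∈ Set.Icc (0:ℝ) 1 → s ∈ Set.Icc (0:ℝ) 1 →
        JoinDev φ (minkComb K L t) (minkComb K L s) = |t - s| * JoinDev φ K L) ∧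
      (∀ (N : ℕ) (p : ℕ → ℝ), 0 < N → p 0 = 0 → p N = 1 →
        (∀ i < N, p i < p (i + 1)) → (∀ i ≤ N, p i ∈ Set.Icc (0:ℝ) 1) →
        ∑ i ∈ Finset.range N, JoinDev φ (minkComb K L (p i)) (minkComb K L (p (i + 1)))
          = JoinDev φ K L) := by
  intro K L hK hL
  have hadd : ∀ K L : Set (Euc n), IsConvexBody K → IsConvexBody L → φ (K + L) = φ K + φ L :=
    fun K L hK hL => val_add hval hcont htrans hhomog hK hL
  have hle : ∀ t s : ℝ, t ∈ Set.Icc (0:ℝ) 1 → s ∈ Set.Icc (0:ℝ) 1 → t ≤ s →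
      JoinDev φ (minkComb K L t) (minkComb K L s) = (s - t) * JoinDev φ K L :=
    fun t s ht hs hts => joinDev_minkComb_of_le hadd hhomog hK hL ht.1 hts hs.2
  refine ⟨fun t s ht hs => ?_, fun N p _ h0 hN hlt hmem => ?_⟩
  · rcases le_total t s with h | h
    · rw [hle t s ht hs h, abs_sub_comm, abs_of_nonneg (sub_nonneg.2 h)]
    · rw [JoinDev_comm, hle s t hs ht h, abs_of_nonneg (sub_nonneg.2 h)]
  · have : ∀ i ∈ Finset.range N, JoinDev φ (minkComb K L (p i)) (minkComb K L (p (i + 1))) =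
        (p (i + 1) - p i) * JoinDev φ K L := by
      intro i hi
      have hi' := Finset.mem_range.1 hi
      exact hle _ _ (hmem i hi'.le) (hmem (i + 1) hi') (hlt i hi').le
    rw [Finset.sum_congr rfl this, ← Finset.sum_mul, Finset.sum_range_sub, h0, hN, sub_zero,
      one_mul]
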